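/- In the consecutive prime power construction, define A_0 := I_{(q+1)q²}, A_1 := I_{q+1} ⊗ I_q ⊗ (J_q − I_q), A_2 := I_{q+1} ⊗ (J_q − I_q) ⊗ J_q, A_3 := (J_{q+1} − I_{q+1}) ⊗ I_{q²}, A_4 := (J_{q+1} − I_{q+1}) ⊗ I_q ⊗ (J_q − I_q), and A_{5,β} := N_β − A_3 for each nonzero β ∈ K. Then these q+5 matrices form a commutative association scheme with q+4 classes; explicitly: (1) every entry of each of these matrices is 0 or 1; (2) their sum equals J_{(q+1)q²}; (3) A_0, A_1, A_2, A_3, A_4 are symmetric and A_{5,β}^⊤ = A_{5,−β} for each nonzero β; (4) the product of any two matrices in the family lies in the ℝ-linear span of the family; (5) any two matrices in the family commute. -/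

import Mathlib

open Matrix Kronecker BigOperators

noncomputable section

/-- The all-ones matrix. -/
def allOnes (n : Type*) : Matrix n n ℝ := Matrix.of fun _ _ => 1

/-- The auxiliary matrix `C_α` for `α ∈ F`: the `((a,u),(b,v))`-entry is `1` iff
`v − u = α·(b − a)`. -/
def auxC {F : Type*} [Field F] [Fintype F] [DecidableEq F] (α : F) :
    Matrix (F × F) (F × F) ℝ :=
  Matrix.of fun p r => if r.2 - p.2 = α * (r.1 - p.1) then 1 else 0

/-- The permutation matrix `P_{β,γ}` with `(a,b)`-entry `1` iff `β·(−a+b) = γ`. -/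
def permP {K : Type*} [Field K] [DecidableEq K] (β γ : K) : Matrix K K ℝ :=
  Matrix.of fun a b => if β * (-a + b) = γ then 1 else 0

/-- The matrix `N_β = Σ_{γ∈K∖{0}} P_{β,γ} ⊗ C_{ψ(γ)}` of the consecutive prime power
construction, where `ψ : K∖{0} → F` is a fixed bijection. -/
def NN {F K : Type*} [Field F] [Fintype F] [DecidableEq F]
    [Field K] [Fintype K] [DecidableEq K]
    (ψ : {x : K // x ≠ 0} ≃ F) (β : K) :
    Matrix (K × (F × F)) (K × (F × F)) ℝ :=
  ∑ γ : {x : K // x ≠ 0}, permP β (γ : K) ⊗ₖ auxC (ψ γ)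

/-- The family of adjacency matrices `A_0, …, A_4, A_{5,β}` (`β ∈ K∖{0}`) of the
association scheme obtained from consecutive prime powers: `A_0 = I`,
`A_1 = I_{q+1} ⊗ I_q ⊗ (J_q − I_q)`, `A_2 = I_{q+1} ⊗ (J_q − I_q) ⊗ J_q`,
`A_3 = (J_{q+1} − I_{q+1}) ⊗ I_{q²}`, `A_4 = (J_{q+1} − I_{q+1}) ⊗ I_q ⊗ (J_q − I_q)`,
and `A_{5,β} = N_β − A_3`. -/
def consA {F K : Type*} [Field F] [Fintype F] [DecidableEq F]
    [Field K] [Fintype K] [DecidableEq K]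
    (ψ : {x : K // x ≠ 0} ≃ F) :
    (Fin 5 ⊕ {x : K // x ≠ 0}) → Matrix (K × (F × F)) (K × (F × F)) ℝ
  | Sum.inl i =>
      if i = 0 then 1
      else if i = 1 then
        (1 : Matrix K K ℝ) ⊗ₖ ((1 : Matrix F F ℝ) ⊗ₖ (allOnes F - 1))
      else if i = 2 then
        (1 : Matrix K K ℝ) ⊗ₖ ((allOnes F - 1) ⊗ₖ allOnes F)
      else if i = 3 then
        (allOnes K - 1) ⊗ₖ (1 : Matrix (F × F) (F × F) ℝ)
      else (allOnes K - 1) ⊗ₖ ((1 : Matrix F F ℝ) ⊗ₖ (allOnes F - 1))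
  | Sum.inr β => NN ψ (β : K) - (allOnes K - 1) ⊗ₖ (1 : Matrix (F × F) (F × F) ℝ)

set_option linter.unusedSectionVars false
set_option linter.unusedSimpArgs false
section helpers
variable {F K : Type*} [Field F] [Fintype F] [DecidableEq F] [Field K] [Fintype K] [DecidableEq K]

def LL (F : Type*) [DecidableEq F] : Matrix (F × F) (F × F) ℝ :=
  Matrix.of fun p r => if p.1 = r.1 then 1 else 0

def DD (ψ : {x : K // x ≠ 0} ≃ F) (k : K) : Matrix (F × F) (F × F) ℝ :=
  if h : k ≠ 0 then auxC (ψ ⟨k, h⟩) else 0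

def blk (f : K → Matrix (F × F) (F × F) ℝ) : Matrix (K × (F × F)) (K × (F × F)) ℝ :=
  Matrix.of fun p r => f (r.1 - p.1) p.2 r.2

lemma blk_mul (f g : K → Matrix (F × F) (F × F) ℝ) :
    blk f * blk g = blk (fun d => ∑ s, f s * g (d - s)) := by
  ext ⟨x, p⟩ ⟨y, r⟩
  simp only [blk, Matrix.mul_apply, Matrix.of_apply, Matrix.sum_apply]
  rw [Fintype.sum_prod_type]
  apply Fintype.sum_equiv (Equiv.subRight x)
  intro s
  simp

lemma NN_eq (ψ : {x : K // x ≠ 0} ≃ F) (β : K) : NN ψ β = blk (fun d => DD ψ (β * d)) := by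
  ext ⟨x, p⟩ ⟨y, r⟩
  simp only [NN, blk, Matrix.of_apply, Matrix.sum_apply, Matrix.kroneckerMap_apply, permP, DD]
  have e : -x + y = y - x := by ring
  rw [e]
  by_cases h : β * (y - x) ≠ 0
  · rw [dif_pos h, Finset.sum_eq_single ⟨_, h⟩]
    · simp
    · intro b _ hb
      rw [if_neg, zero_mul]
      intro h2; apply hb; ext; exact h2.symm
    · simp
  · rw [dif_neg h]
    apply Finset.sum_eq_zero
    intro b _
    rw [if_neg, zero_mul]
    intro h2; exact h (h2 ▸ b.2)

lemma auxC_mul_L (α : F) : auxC α * LL F = allOnes (F × F) := by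
  ext ⟨a, u⟩ ⟨b, v⟩
  simp [auxC, LL, allOnes, Matrix.mul_apply, Fintype.sum_prod_type, sub_eq_iff_eq_add]

lemma auxC_mul_J (α : F) : auxC α * allOnes (F × F) = (Fintype.card F : ℝ) • allOnes (F × F) := by
  ext ⟨a, u⟩ ⟨b, v⟩
  simp only [auxC, allOnes, Matrix.mul_apply, Fintype.sum_prod_type, sub_eq_iff_eq_add,
    Matrix.of_apply, mul_one, Finset.sum_ite_eq', Finset.mem_univ, if_true]
  simp

lemma auxC_mul_self (α : F) : auxC α * auxC α = (Fintype.card F : ℝ) • auxC α := by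
  ext ⟨a, u⟩ ⟨b, v⟩
  simp only [auxC, Matrix.mul_apply, Fintype.sum_prod_type, sub_eq_iff_eq_add, Matrix.of_apply,
    Matrix.smul_apply, smul_eq_mul, ite_mul, one_mul, zero_mul, Finset.sum_ite_eq',
    Finset.sum_ite_eq, Finset.mem_univ, if_true]
  have : ∀ c, (v = α * (b - c) + (α * (c - a) + u)) = (v = α * (b - a) + u) := by
    intro c; congr 1; ring
  simp [this]

lemma auxC_mul_ne (α α' : F) (h : α ≠ α') : auxC α * auxC α' = allOnes (F × F) := by
  ext ⟨a, u⟩ ⟨b, v⟩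
  simp only [auxC, Matrix.mul_apply, Fintype.sum_prod_type, sub_eq_iff_eq_add, Matrix.of_apply,
    ite_mul, one_mul, zero_mul, Finset.sum_ite_eq', allOnes,
    Finset.sum_ite_eq, Finset.mem_univ, if_true]
  have h' : α - α' ≠ 0 := sub_ne_zero.mpr h
  have : ∀ c, (v = α' * (b - c) + (α * (c - a) + u)) ↔
      c = (v - u - α' * b + α * a) / (α - α') := by
    intro c
    rw [eq_div_iff h']
    constructor
    · intro h; rw [h]; ring
    · intro h; linear_combination -h
  simp [this]

lemma auxC_sum : ∑ α : F, auxC α =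
    allOnes (F × F) - LL F + (Fintype.card F : ℝ) • (1 : Matrix (F × F) (F × F) ℝ) := by
  ext ⟨a, u⟩ ⟨b, v⟩
  simp only [auxC, Matrix.sum_apply, Matrix.of_apply, allOnes, LL, Matrix.add_apply,
    Matrix.sub_apply, Matrix.smul_apply, Matrix.one_apply, Prod.mk.injEq, smul_eq_mul]
  by_cases h : a = b
  · subst h
    by_cases h2 : u = v
    · simp [h2]
    · have : v - u ≠ 0 := sub_ne_zero.mpr (Ne.symm h2)
      simp [h2, this]
  · have h' : b - a ≠ 0 := sub_ne_zero.mpr (Ne.symm h)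
    have : ∀ α : F, (v - u = α * (b - a)) ↔ α = (v - u) / (b - a) := by
      intro α; rw [eq_div_iff h', eq_comm]
    simp [this, h]

lemma DD_zero (ψ : {x : K // x ≠ 0} ≃ F) : DD ψ 0 = 0 := by simp [DD]

lemma DD_ne (ψ : {x : K // x ≠ 0} ≃ F) {k : K} (h : k ≠ 0) : DD ψ k = auxC (ψ ⟨k, h⟩) := by
  simp [DD, h]

lemma DD_sum_sub (ψ : {x : K // x ≠ 0} ≃ F) {d : K} (hd : d ≠ 0) :
    ∑ β : {x : K // x ≠ 0}, DD ψ (β * d) =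
    allOnes (F × F) - LL F + (Fintype.card F : ℝ) • (1 : Matrix (F × F) (F × F) ℝ) := by
  rw [← auxC_sum, ← Equiv.sum_comp ψ]
  have e : {x : K // x ≠ 0} ≃ {x : K // x ≠ 0} :=
    (Equiv.mulRight₀ d hd).subtypeEquiv (by intro a; simp [hd])
  refine Fintype.sum_equiv ((Equiv.mulRight₀ d hd).subtypeEquiv (by intro a; simp [hd])) _ _ ?_
  intro β
  rw [DD_ne ψ (mul_ne_zero β.2 hd)]
  rfl

lemma sum_sub_eq {M : Type*} [AddCommMonoid M] (f : K → M) (h0 : f 0 = 0) :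
    ∑ k, f k = ∑ k : {x : K // x ≠ 0}, f k := by
  rw [← Finset.sum_subtype (Finset.univ.filter (fun x : K => x ≠ 0)) (by simp) f,
    Finset.sum_filter]
  apply Finset.sum_congr rfl
  intro x _
  by_cases h : x = 0 <;> simp [h, h0]

lemma DD_sum (ψ : {x : K // x ≠ 0} ≃ F) {β : K} (hd : β ≠ 0) :
    ∑ d : K, DD ψ (β * d) =
    allOnes (F × F) - LL F + (Fintype.card F : ℝ) • (1 : Matrix (F × F) (F × F) ℝ) := by
  rw [← DD_sum_sub ψ hd, sum_sub_eq _ (by simp [DD_zero])]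
  simp [mul_comm]

lemma comm_of_inv {G : Type*} [AddCommGroup G] [Fintype G] (A B : Matrix G G ℝ)
    (hA : ∀ p r, A p r = A 0 (r - p)) (hB : ∀ p r, B p r = B 0 (r - p)) : A * B = B * A := by
  ext p r
  simp only [Matrix.mul_apply]
  refine Fintype.sum_equiv (Equiv.subLeft (p + r)) _ _ ?_
  intro s
  have e1 : s - p = r - (p + r - s) := by abel
  have e2 : r - s = (p + r - s) - p := by abel
  rw [Equiv.subLeft_apply, hA p s, hB s r, hB p, hA _ r, mul_comm, e1, e2]

def EE (ψ : {x : K // x ≠ 0} ≃ F) :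
    (Fin 5 ⊕ {x : K // x ≠ 0}) → Matrix (K × (F × F)) (K × (F × F)) ℝ
  | Sum.inl i =>
      if i = 0 then blk (fun d => if d = 0 then 1 else 0)
      else if i = 1 then blk (fun d => if d = 0 then LL F else 0)
      else if i = 2 then blk (fun d => if d = 0 then allOnes (F × F) else 0)
      else if i = 3 then blk (fun _ => 1)
      else blk (fun _ => LL F)
  | Sum.inr β => blk (fun d => DD ψ (β * d))

def AllB : Matrix (K × (F × F)) (K × (F × F)) ℝ := blk (fun _ => allOnes (F × F))

lemma blk_inv (ψ : {x : K // x ≠ 0} ≃ F) (i) : ∀ p r, EE ψ i p r = EE ψ i 0 (r - p) := by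
  rintro ⟨x, a, u⟩ ⟨y, b, v⟩
  rcases i with i | β
  · by_cases h : x = y
    · subst h
      fin_cases i <;>
        simp [EE, blk, LL, allOnes, Matrix.one_apply, Prod.ext_iff, sub_eq_zero,
          eq_comm (a := (0 : F)), eq_comm (a := b), eq_comm (a := v)]
    · have h' : y - x ≠ 0 := sub_ne_zero.mpr (Ne.symm h)
      fin_cases i <;>
        simp [EE, blk, LL, h, h', allOnes, Matrix.one_apply, Prod.ext_iff, sub_eq_zero (b := a),
          sub_eq_zero (b := u),
          eq_comm (a := (0 : F)), eq_comm (a := b), eq_comm (a := v)]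
  · simp only [EE, blk, Matrix.of_apply]
    by_cases h : (β : K) * (y - x) = 0
    · simp [h, DD_zero]
    · simp [DD, auxC, h]

lemma A0 (ψ : {x : K // x ≠ 0} ≃ F) : consA ψ (Sum.inl 0) = EE ψ (Sum.inl 0) := by
  ext ⟨x, a, u⟩ ⟨y, b, v⟩
  simp only [consA, EE, blk]
  by_cases h : x = y
  · subst h; simp [Matrix.one_apply]
  · have : y - x ≠ 0 := sub_ne_zero.mpr (Ne.symm h)
    simp [this, h, Matrix.one_apply]

lemma A1 (ψ : {x : K // x ≠ 0} ≃ F) :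
    consA ψ (Sum.inl 1) = EE ψ (Sum.inl 1) - EE ψ (Sum.inl 0) := by
  ext ⟨x, a, u⟩ ⟨y, b, v⟩
  by_cases h : x = y
  · subst h; simp [consA, EE, blk, Matrix.one_apply, LL, allOnes]; split_ifs <;> simp_all
  · have : y - x ≠ 0 := sub_ne_zero.mpr (Ne.symm h)
    simp [consA, EE, blk, this, h, Matrix.one_apply]

lemma A2 (ψ : {x : K // x ≠ 0} ≃ F) :
    consA ψ (Sum.inl 2) = EE ψ (Sum.inl 2) - EE ψ (Sum.inl 1) := by
  ext ⟨x, a, u⟩ ⟨y, b, v⟩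
  by_cases h : x = y
  · subst h; simp [consA, EE, blk, Matrix.one_apply, LL, allOnes]
  · have : y - x ≠ 0 := sub_ne_zero.mpr (Ne.symm h)
    simp [consA, EE, blk, this, h, Matrix.one_apply]

lemma A3 (ψ : {x : K // x ≠ 0} ≃ F) :
    consA ψ (Sum.inl 3) = EE ψ (Sum.inl 3) - EE ψ (Sum.inl 0) := by
  ext ⟨x, a, u⟩ ⟨y, b, v⟩
  by_cases h : x = y
  · subst h; simp [consA, EE, blk, Matrix.one_apply, LL, allOnes]
  · have : y - x ≠ 0 := sub_ne_zero.mpr (Ne.symm h)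
    simp [consA, EE, blk, this, h, Matrix.one_apply, allOnes]

lemma A4 (ψ : {x : K // x ≠ 0} ≃ F) :
    consA ψ (Sum.inl 4) = EE ψ (Sum.inl 4) - EE ψ (Sum.inl 1) - EE ψ (Sum.inl 3)
      + EE ψ (Sum.inl 0) := by
  ext ⟨x, a, u⟩ ⟨y, b, v⟩
  by_cases h : x = y
  · subst h; simp [consA, EE, blk, Matrix.one_apply, LL, allOnes]
  · have : y - x ≠ 0 := sub_ne_zero.mpr (Ne.symm h)
    simp [consA, EE, blk, this, h, Matrix.one_apply, LL, allOnes]; split_ifs <;> simp_all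

lemma A5 (ψ : {x : K // x ≠ 0} ≃ F) (β) :
    consA ψ (Sum.inr β) = EE ψ (Sum.inr β) - EE ψ (Sum.inl 3) + EE ψ (Sum.inl 0) := by
  have := A3 ψ
  simp only [consA, EE, NN_eq] at *
  simp at this
  simp [this]
  abel

lemma A_sum (hcard : Fintype.card K = Fintype.card F + 1) (ψ : {x : K // x ≠ 0} ≃ F) :
    (∑ i, consA ψ i) = AllB := by
  have hc : Fintype.card {x : K // x ≠ 0} = Fintype.card F := Fintype.card_congr ψ
  rw [Fintype.sum_sum_type, Fin.sum_univ_five, A0, A1, A2, A3, A4]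
  simp only [A5, Finset.sum_add_distrib, Finset.sum_sub_distrib, Finset.sum_const,
    Finset.card_univ, hc]
  have : ∑ β, EE ψ (Sum.inr β) = AllB - EE ψ (Sum.inl 2) - EE ψ (Sum.inl 4) + EE ψ (Sum.inl 1) +
      Fintype.card F • EE ψ (Sum.inl 3) - Fintype.card F • EE ψ (Sum.inl 0) := by
    ext ⟨x, p⟩ ⟨y, r⟩
    by_cases h : x = y
    · subst h; simp [EE, blk, AllB, Matrix.sum_apply, DD_zero]
    · have h' : y - x ≠ 0 := sub_ne_zero.mpr (Ne.symm h)
      have := congrFun (congrFun (DD_sum_sub ψ h') p) r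
      rw [Matrix.sum_apply] at this
      simp [EE, blk, AllB, Matrix.sum_apply, h', this]
  rw [this]
  abel

lemma NE0 (ψ : {x : K // x ≠ 0} ≃ F) (i) : EE ψ (Sum.inl 0) * EE ψ i = EE ψ i := by
  rw [← A0]; simp [consA]

lemma LL_mul : LL F * LL F = (Fintype.card F : ℝ) • LL F := by
  ext ⟨a, u⟩ ⟨b, v⟩
  simp only [LL, Matrix.mul_apply, Fintype.sum_prod_type, Matrix.of_apply]
  by_cases h : a = b <;> simp [h]

lemma LL_mul_J : LL F * allOnes (F × F) = (Fintype.card F : ℝ) • allOnes (F × F) := by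
  ext ⟨a, u⟩ ⟨b, v⟩
  simp only [LL, allOnes, Matrix.mul_apply, Fintype.sum_prod_type, Matrix.of_apply]
  rw [Finset.sum_comm]
  simp

lemma J_mul_LL : allOnes (F × F) * LL F = (Fintype.card F : ℝ) • allOnes (F × F) := by
  ext ⟨a, u⟩ ⟨b, v⟩
  simp only [LL, allOnes, Matrix.mul_apply, Fintype.sum_prod_type, Matrix.of_apply]
  simp

lemma J_mul_J : allOnes (F × F) * allOnes (F × F) =
    ((Fintype.card F : ℝ) * Fintype.card F) • allOnes (F × F) := by
  ext ⟨a, u⟩ ⟨b, v⟩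
  simp [allOnes, Matrix.mul_apply, Fintype.sum_prod_type]

lemma blk_smul (c : ℝ) (f : K → Matrix (F × F) (F × F) ℝ) :
    blk (fun d => c • f d) = c • blk f := rfl

lemma blk_add (f g : K → Matrix (F × F) (F × F) ℝ) :
    blk (fun d => f d + g d) = blk f + blk g := rfl

lemma blk_sub (f g : K → Matrix (F × F) (F × F) ℝ) :
    blk (fun d => f d - g d) = blk f - blk g := rfl

lemma blk_const_mul (A B : Matrix (F × F) (F × F) ℝ) :
    blk (fun _ : K => A) * blk (fun _ : K => B) =
      (Fintype.card K : ℝ) • blk (fun _ : K => A * B) := by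
  rw [blk_mul, ← blk_smul]
  simp only [Finset.sum_const, Finset.card_univ, Nat.cast_smul_eq_nsmul]

lemma DD_mul (ψ : {x : K // x ≠ 0} ≃ F) (k l : K) : DD ψ k * DD ψ l =
    allOnes (F × F) - (if k = 0 then allOnes (F × F) else 0)
      - (if l = 0 then allOnes (F × F) else 0)
      + (if k = 0 ∧ l = 0 then (2 : ℝ) • allOnes (F × F) else 0)
      + (if k = l then (Fintype.card F : ℝ) • DD ψ k - allOnes (F × F) else 0) := by
  by_cases hk : k = 0
  · subst hk
    by_cases hl : l = 0
    · subst hl; simp [DD_zero]; module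
    · simp [DD_zero, hl, Ne.symm hl]
  · by_cases hl : l = 0
    · subst hl; simp [DD_zero, hk]
    · by_cases h : k = l
      · subst h; simp [hk, DD_ne, auxC_mul_self]
      · rw [DD_ne ψ hk, DD_ne ψ hl, auxC_mul_ne]
        · simp [hk, hl, h]
        · intro h2; apply h; simpa using ψ.injective h2

lemma DD_mul_J (ψ : {x : K // x ≠ 0} ≃ F) (k : K) : DD ψ k * allOnes (F × F) =
    (Fintype.card F : ℝ) • (allOnes (F × F) - if k = 0 then allOnes (F × F) else 0) := by
  by_cases hk : k = 0
  · simp [hk, DD_zero]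
  · simp [hk, DD_ne, auxC_mul_J]

lemma DD_mul_LL (ψ : {x : K // x ≠ 0} ≃ F) (k : K) : DD ψ k * LL F =
    allOnes (F × F) - if k = 0 then allOnes (F × F) else 0 := by
  by_cases hk : k = 0
  · simp [hk, DD_zero]
  · simp [hk, DD_ne, auxC_mul_L]

lemma EE_comm (ψ : {x : K // x ≠ 0} ≃ F) (i j) : EE ψ i * EE ψ j = EE ψ j * EE ψ i :=
  comm_of_inv _ _ (blk_inv ψ i) (blk_inv ψ j)

lemma NN1 (ψ : {x : K // x ≠ 0} ≃ F) (β β' : {x : K // x ≠ 0}) (h : (β : K) + β' = 0)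
    (hcard : Fintype.card K = Fintype.card F + 1) :
    EE ψ (Sum.inr β) * EE ψ (Sum.inr β') = ((Fintype.card F : ℝ) - 1) • AllB
      + (1 : ℝ) • EE ψ (Sum.inl 2) - (Fintype.card F : ℝ) • EE ψ (Sum.inl 1)
      + ((Fintype.card F : ℝ) * (Fintype.card F : ℝ)) • EE ψ (Sum.inl 0) := by
  have hβ := β.2
  have hβ' := β'.2
  simp only [EE, blk_mul, AllB]
  simp only [reduceIte, show (1 : Fin 5) ≠ 0 by decide, show (2 : Fin 5) ≠ 0 by decide,
    show (2 : Fin 5) ≠ 1 by decide, ← blk_smul, ← blk_add, ← blk_sub]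
  congr 1
  funext d
  have e1 : ∀ s : K, ((β : K) * s = β' * (d - s)) ↔ d = 0 := by
    intro s
    rw [show (β' : K) = -β by linear_combination h]
    constructor
    · intro h2
      have : (β : K) * d = 0 := by linear_combination h2
      simpa [hβ] using this
    · rintro rfl; ring
  simp only [DD_mul, e1, Finset.sum_add_distrib, Finset.sum_sub_distrib, mul_eq_zero, hβ, hβ',
    false_or, sub_eq_zero, Finset.sum_ite_eq, Finset.sum_ite_eq', Finset.mem_univ, if_true]
  by_cases hd : d = 0
  · subst hd
    have : ∀ s : K, (s = 0 ∧ 0 = s) ↔ s = 0 := by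
      intro s; constructor
      · exact fun h => h.1
      · rintro rfl; simp
    simp [this, ← Finset.smul_sum, DD_sum ψ hβ, hcard, -nsmul_eq_mul, -smul_eq_mul]
    simp only [← Nat.cast_smul_eq_nsmul ℝ]
    push_cast
    module
  · have : ∀ s : K, ¬ (s = 0 ∧ d = s) := by rintro s ⟨h1, h2⟩; exact hd (h2.trans h1)
    simp [hd, this, hcard, -nsmul_eq_mul, -smul_eq_mul]
    simp only [← Nat.cast_smul_eq_nsmul ℝ]
    push_cast
    module

lemma NN2 (ψ : {x : K // x ≠ 0} ≃ F) (β β' : {x : K // x ≠ 0}) (h : (β : K) + β' ≠ 0)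
    (hcard : Fintype.card K = Fintype.card F + 1) :
    EE ψ (Sum.inr β) * EE ψ (Sum.inr β') = ((Fintype.card F : ℝ) - 2) • AllB
      + (2 : ℝ) • EE ψ (Sum.inl 2) + (Fintype.card F : ℝ) •
       EE ψ (Sum.inr ⟨β * β' / (β + β'), div_ne_zero (mul_ne_zero β.2 β'.2) h⟩) := by
  have hβ := β.2
  have hβ' := β'.2
  simp only [EE, blk_mul, AllB]
  simp only [reduceIte, show (1 : Fin 5) ≠ 0 by decide, show (2 : Fin 5) ≠ 0 by decide,
    show (2 : Fin 5) ≠ 1 by decide, ← blk_smul, ← blk_add, ← blk_sub]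
  congr 1
  funext d
  have e1 : ∀ s : K, ((β : K) * s = β' * (d - s)) ↔ s = β' * d / (β + β') := by
    intro s
    rw [eq_div_iff h]
    constructor
    · intro h2; linear_combination h2
    · intro h2; linear_combination h2
  simp only [DD_mul, e1, Finset.sum_add_distrib, Finset.sum_sub_distrib, mul_eq_zero, hβ, hβ',
    false_or, sub_eq_zero, Finset.sum_ite_eq, Finset.sum_ite_eq', Finset.mem_univ, if_true]
  have e2 : (β : K) * (β' * d / (β + β')) = β * β' / (β + β') * d := by ring
  rw [e2]
  by_cases hd : d = 0
  · subst hd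
    have : ∀ s : K, (s = 0 ∧ 0 = s) ↔ s = 0 := by
      intro s; constructor
      · exact fun h => h.1
      · rintro rfl; simp
    simp [this, hcard, -nsmul_eq_mul, -smul_eq_mul]
    simp only [← Nat.cast_smul_eq_nsmul ℝ]
    push_cast
    module
  · have : ∀ s : K, ¬ (s = 0 ∧ d = s) := by rintro s ⟨h1, h2⟩; exact hd (h2.trans h1)
    simp [hd, this, hcard, -nsmul_eq_mul, -smul_eq_mul]
    simp only [← Nat.cast_smul_eq_nsmul ℝ]
    push_cast
    module

lemma EE_mem (ψ : {x : K // x ≠ 0} ≃ F) (i) :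
    EE ψ i ∈ Submodule.span ℝ (Set.range (consA ψ)) := by
  have hA : ∀ i, consA ψ i ∈ Submodule.span ℝ (Set.range (consA ψ)) := fun i =>
    Submodule.subset_span ⟨i, rfl⟩
  have h0 : EE ψ (Sum.inl 0) ∈ Submodule.span ℝ (Set.range (consA ψ)) := A0 ψ ▸ hA _
  have h1 : EE ψ (Sum.inl 1) ∈ Submodule.span ℝ (Set.range (consA ψ)) := by
    have := add_mem (hA (Sum.inl 1)) h0
    rw [A1] at this; convert this using 1; abel
  have h2 : EE ψ (Sum.inl 2) ∈ Submodule.span ℝ (Set.range (consA ψ)) := by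
    have := add_mem (hA (Sum.inl 2)) h1
    rw [A2] at this; convert this using 1; abel
  have h3 : EE ψ (Sum.inl 3) ∈ Submodule.span ℝ (Set.range (consA ψ)) := by
    have := add_mem (hA (Sum.inl 3)) h0
    rw [A3] at this; convert this using 1; abel
  have h4 : EE ψ (Sum.inl 4) ∈ Submodule.span ℝ (Set.range (consA ψ)) := by
    have := sub_mem (add_mem (add_mem (hA (Sum.inl 4)) h1) h3) h0
    rw [A4] at this; convert this using 1; abel
  rcases i with i | β
  · fin_cases i
    exacts [h0, h1, h2, h3, h4]
  · have := sub_mem (add_mem (hA (Sum.inr β)) h3) h0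
    rw [A5] at this; convert this using 1; abel

lemma A_mem (ψ : {x : K // x ≠ 0} ≃ F) (i) :
    consA ψ i ∈ Submodule.span ℝ (Set.range (EE ψ)) := by
  have hA : ∀ i, EE ψ i ∈ Submodule.span ℝ (Set.range (EE ψ)) := fun i =>
    Submodule.subset_span ⟨i, rfl⟩
  rcases i with i | β
  · fin_cases i
    · exact A0 ψ ▸ hA _
    · exact A1 ψ ▸ sub_mem (hA _) (hA _)
    · exact A2 ψ ▸ sub_mem (hA _) (hA _)
    · exact A3 ψ ▸ sub_mem (hA _) (hA _)
    · exact A4 ψ ▸ add_mem (sub_mem (sub_mem (hA _) (hA _)) (hA _)) (hA _)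
  · exact A5 ψ β ▸ add_mem (sub_mem (hA _) (hA _)) (hA _)

lemma NE1 (ψ : {x : K // x ≠ 0} ≃ F) (β) :
    EE ψ (Sum.inr β) * EE ψ (Sum.inl 1) = AllB - EE ψ (Sum.inl 2) := by
  simp [EE, blk_mul, AllB, ← blk_sub, DD_mul_LL, β.2, mul_ite, sub_eq_zero]

lemma NE2 (ψ : {x : K // x ≠ 0} ≃ F) (β) :
    EE ψ (Sum.inr β) * EE ψ (Sum.inl 2) = (Fintype.card F : ℝ) • (AllB - EE ψ (Sum.inl 2)) := by
  simp [EE, blk_mul, AllB, ← blk_sub, ← blk_smul, DD_mul_J, β.2, mul_ite, sub_eq_zero]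

lemma NE3 (ψ : {x : K // x ≠ 0} ≃ F) (β) :
    EE ψ (Sum.inr β) * EE ψ (Sum.inl 3) = AllB - EE ψ (Sum.inl 4)
      + (Fintype.card F : ℝ) • EE ψ (Sum.inl 3) := by
  simp [EE, blk_mul, AllB, ← blk_sub, ← blk_smul, ← blk_add, DD_sum ψ β.2]

lemma NE4 (ψ : {x : K // x ≠ 0} ≃ F) (β) :
    EE ψ (Sum.inr β) * EE ψ (Sum.inl 4) = (Fintype.card F : ℝ) • AllB := by
  simp [EE, blk_mul, AllB, ← blk_sub, ← blk_smul, ← blk_add, ← Finset.sum_mul, DD_sum ψ β.2]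
  simp [add_mul, sub_mul, J_mul_LL, LL_mul]

lemma EE_mul_mem (hcard : Fintype.card K = Fintype.card F + 1) (ψ : {x : K // x ≠ 0} ≃ F) (i j) :
    EE ψ i * EE ψ j ∈ Submodule.span ℝ (Set.range (consA ψ)) := by
  set S := Submodule.span ℝ (Set.range (consA ψ)) with hS
  have hE : ∀ i, EE ψ i ∈ S := EE_mem ψ
  have hAll : AllB ∈ S := by
    rw [← A_sum hcard ψ]
    exact sum_mem fun i _ => Submodule.subset_span ⟨i, rfl⟩
  have h0 : ∀ i, EE ψ (Sum.inl 0) * EE ψ i ∈ S := fun i => by rw [NE0]; exact hE i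
  have hN : ∀ β (i : Fin 5), EE ψ (Sum.inr β) * EE ψ (Sum.inl i) ∈ S := by
    intro β i
    fin_cases i
    · rw [EE_comm]; exact h0 _
    · exact NE1 ψ β ▸ sub_mem hAll (hE _)
    · exact NE2 ψ β ▸ S.smul_mem _ (sub_mem hAll (hE _))
    · exact NE3 ψ β ▸ add_mem (sub_mem hAll (hE _)) (S.smul_mem _ (hE _))
    · exact NE4 ψ β ▸ S.smul_mem _ hAll
  have e11 : EE ψ (Sum.inl 1) * EE ψ (Sum.inl 1) = (Fintype.card F : ℝ) • EE ψ (Sum.inl 1) := by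
    simp [EE, blk_mul, ← blk_smul, LL_mul, mul_ite, sub_eq_zero]
  have e12 : EE ψ (Sum.inl 1) * EE ψ (Sum.inl 2) = (Fintype.card F : ℝ) • EE ψ (Sum.inl 2) := by
    simp [EE, blk_mul, ← blk_smul, LL_mul_J, mul_ite, sub_eq_zero]
  have e13 : EE ψ (Sum.inl 1) * EE ψ (Sum.inl 3) = EE ψ (Sum.inl 4) := by
    simp [EE, blk_mul]
  have e14 : EE ψ (Sum.inl 1) * EE ψ (Sum.inl 4) = (Fintype.card F : ℝ) • EE ψ (Sum.inl 4) := by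
    simp [EE, blk_mul, ← blk_smul, LL_mul]
  have e22 : EE ψ (Sum.inl 2) * EE ψ (Sum.inl 2) =
      ((Fintype.card F : ℝ) * Fintype.card F) • EE ψ (Sum.inl 2) := by
    simp [EE, blk_mul, ← blk_smul, J_mul_J, mul_ite, sub_eq_zero]
  have e23 : EE ψ (Sum.inl 2) * EE ψ (Sum.inl 3) = AllB := by
    simp [EE, blk_mul, AllB]
  have e24 : EE ψ (Sum.inl 2) * EE ψ (Sum.inl 4) = (Fintype.card F : ℝ) • AllB := by
    simp [EE, blk_mul, AllB, ← blk_smul, J_mul_LL]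
  have e33 : EE ψ (Sum.inl 3) * EE ψ (Sum.inl 3) = (Fintype.card K : ℝ) • EE ψ (Sum.inl 3) := by
    simp [EE, blk_const_mul]
  have e34 : EE ψ (Sum.inl 3) * EE ψ (Sum.inl 4) = (Fintype.card K : ℝ) • EE ψ (Sum.inl 4) := by
    simp [EE, blk_const_mul]
  have e44 : EE ψ (Sum.inl 4) * EE ψ (Sum.inl 4) =
      (Fintype.card K : ℝ) • (Fintype.card F : ℝ) • EE ψ (Sum.inl 4) := by
    simp [EE, blk_const_mul, LL_mul, blk_smul]
  have m11 : EE ψ (Sum.inl 1) * EE ψ (Sum.inl 1) ∈ S := by rw [e11]; exact S.smul_mem _ (hE _)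
  have m12 : EE ψ (Sum.inl 1) * EE ψ (Sum.inl 2) ∈ S := by rw [e12]; exact S.smul_mem _ (hE _)
  have m13 : EE ψ (Sum.inl 1) * EE ψ (Sum.inl 3) ∈ S := by rw [e13]; exact hE _
  have m14 : EE ψ (Sum.inl 1) * EE ψ (Sum.inl 4) ∈ S := by rw [e14]; exact S.smul_mem _ (hE _)
  have m22 : EE ψ (Sum.inl 2) * EE ψ (Sum.inl 2) ∈ S := by rw [e22]; exact S.smul_mem _ (hE _)
  have m23 : EE ψ (Sum.inl 2) * EE ψ (Sum.inl 3) ∈ S := by rw [e23]; exact hAll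
  have m24 : EE ψ (Sum.inl 2) * EE ψ (Sum.inl 4) ∈ S := by rw [e24]; exact S.smul_mem _ hAll
  have m33 : EE ψ (Sum.inl 3) * EE ψ (Sum.inl 3) ∈ S := by rw [e33]; exact S.smul_mem _ (hE _)
  have m34 : EE ψ (Sum.inl 3) * EE ψ (Sum.inl 4) ∈ S := by rw [e34]; exact S.smul_mem _ (hE _)
  have m44 : EE ψ (Sum.inl 4) * EE ψ (Sum.inl 4) ∈ S := by rw [e44]; exact S.smul_mem _ (S.smul_mem _ (hE _))
  rcases i with i | β <;> rcases j with j | β'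
  · have hF : ∀ k : Fin 5, k = 0 ∨ k = 1 ∨ k = 2 ∨ k = 3 ∨ k = 4 := by decide
    have hc : ∀ i j, EE ψ i * EE ψ j ∈ S → EE ψ j * EE ψ i ∈ S := by
      intro i j h; rw [EE_comm]; exact h
    rcases hF i with rfl | rfl | rfl | rfl | rfl <;>
    rcases hF j with rfl | rfl | rfl | rfl | rfl <;>
      first
      | with_reducible exact h0 _
      | (apply hc; with_reducible exact h0 _)
      | with_reducible assumption
      | (apply hc; with_reducible assumption)
  · rw [EE_comm]; exact hN _ _
  · exact hN _ _
  · by_cases h : (β : K) + β' = 0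
    · rw [NN1 ψ β β' h hcard]
      exact add_mem (sub_mem (add_mem (S.smul_mem _ hAll) (S.smul_mem _ (hE _)))
        (S.smul_mem _ (hE _))) (S.smul_mem _ (hE _))
    · rw [NN2 ψ β β' h hcard]
      exact add_mem (add_mem (S.smul_mem _ hAll) (S.smul_mem _ (hE _))) (S.smul_mem _ (hE _))

lemma span_mul_mem (ψ : {x : K // x ≠ 0} ≃ F)
    (hcard : Fintype.card K = Fintype.card F + 1) (i j) :
    consA ψ i * consA ψ j ∈ Submodule.span ℝ (Set.range (consA ψ)) := by
  have h := Submodule.mul_mem_mul (A_mem ψ i) (A_mem ψ j)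
  rw [Submodule.span_mul_span] at h
  refine Submodule.span_le.mpr ?_ h
  rintro _ ⟨_, ⟨i, rfl⟩, _, ⟨j, rfl⟩, rfl⟩
  exact EE_mul_mem hcard ψ i j

lemma A_inv (ψ : {x : K // x ≠ 0} ≃ F) (i) : ∀ p r, consA ψ i p r = consA ψ i 0 (r - p) := by
  intro p r
  have := blk_inv ψ
  rcases i with i | β
  · fin_cases i
    · change consA ψ (Sum.inl 0) p r = consA ψ (Sum.inl 0) 0 (r - p)
      rw [A0, this]
    · change consA ψ (Sum.inl 1) p r = consA ψ (Sum.inl 1) 0 (r - p)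
      simp only [A1, Matrix.sub_apply]; rw [this, this _ p r]
    · change consA ψ (Sum.inl 2) p r = consA ψ (Sum.inl 2) 0 (r - p)
      simp only [A2, Matrix.sub_apply]; rw [this, this _ p r]
    · change consA ψ (Sum.inl 3) p r = consA ψ (Sum.inl 3) 0 (r - p)
      simp only [A3, Matrix.sub_apply]; rw [this, this _ p r]
    · change consA ψ (Sum.inl 4) p r = consA ψ (Sum.inl 4) 0 (r - p)
      simp only [A4, Matrix.sub_apply, Matrix.add_apply]
      rw [this, this _ p r, this _ p r, this _ p r]
  · simp only [A5, Matrix.sub_apply, Matrix.add_apply]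
    rw [this, this _ p r, this _ p r]

lemma A5_entry (ψ : {x : K // x ≠ 0} ≃ F) (β : {x : K // x ≠ 0}) (x y : K) (a u b v : F) :
    consA ψ (Sum.inr β) (x, a, u) (y, b, v) =
      if h : (β : K) * (y - x) ≠ 0 then
        (if a ≠ b ∧ v - u = ψ ⟨_, h⟩ * (b - a) then 1 else 0) else 0 := by
  have hβ := β.2
  by_cases h : x = y
  · subst h
    simp [consA, NN_eq, blk, DD_zero, allOnes]
  · have h' : (β : K) * (y - x) ≠ 0 := mul_ne_zero hβ (sub_ne_zero.mpr (Ne.symm h))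
    rw [dif_pos h']
    simp only [consA, NN_eq, blk, Matrix.sub_apply, Matrix.of_apply, DD_ne ψ h', auxC, allOnes,
      Matrix.kroneckerMap_apply, Matrix.one_apply, h, Prod.mk.injEq]
    by_cases hab : a = b
    · subst hab
      simp [sub_eq_zero, eq_comm]
    · simp [hab]

end helpers
/-- The matrices `A_0, …, A_4, A_{5,β}` (`β ∈ K∖{0}`) form a commutative association
scheme with `q+4` classes: they are `(0,1)`-matrices summing to the all-ones matrix,
the family is closed under transposition (`A_0, …, A_4` are symmetric and
`A_{5,β}ᵀ = A_{5,−β}`), the product of any two members lies in the linear span of the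
family, and any two members commute. -/
theorem cons_association_scheme {F K : Type*} [Field F] [Fintype F] [DecidableEq F]
    [Field K] [Fintype K] [DecidableEq K]
    (hcard : Fintype.card K = Fintype.card F + 1)
    (ψ : {x : K // x ≠ 0} ≃ F) :
    (∀ i p r, consA ψ i p r = 0 ∨ consA ψ i p r = 1) ∧
    (∑ i, consA ψ i) = allOnes (K × (F × F)) ∧
    ((∀ i : Fin 5, (consA ψ (Sum.inl i))ᵀ = consA ψ (Sum.inl i)) ∧
      ∀ β : {x : K // x ≠ 0},
        (consA ψ (Sum.inr β))ᵀ = consA ψ (Sum.inr ⟨-(β : K), neg_ne_zero.mpr β.2⟩)) ∧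
    (∀ i j, consA ψ i * consA ψ j ∈ Submodule.span ℝ (Set.range (consA ψ))) ∧
    (∀ i j, consA ψ i * consA ψ j = consA ψ j * consA ψ i) := by
  refine ⟨?_, ?_, ⟨?_, ?_⟩, span_mul_mem ψ hcard, fun i j => comm_of_inv _ _ (A_inv ψ i) (A_inv ψ j)⟩
  · rintro (i | β) ⟨x, a, u⟩ ⟨y, b, v⟩
    · fin_cases i <;>
        simp [consA, allOnes, Matrix.one_apply] <;>
        first
        | tauto
        | (split_ifs <;> simp_all)
    · rw [A5_entry]
      split_ifs <;> simp
  · rw [A_sum hcard]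
    rfl
  · intro i
    ext ⟨x, a, u⟩ ⟨y, b, v⟩
    fin_cases i <;>
      simp [consA, allOnes, Matrix.one_apply, eq_comm]
  · intro β
    ext ⟨x, a, u⟩ ⟨y, b, v⟩
    rw [Matrix.transpose_apply, A5_entry, A5_entry]
    have e : (β : K) * (x - y) = -β * (y - x) := by ring
    simp only [e]
    have e2 : ∀ t : F, (b ≠ a ∧ u - v = t * (a - b)) ↔ (a ≠ b ∧ v - u = t * (b - a)) := by
      intro t
      rw [ne_comm]
      refine and_congr_right fun _ => ⟨fun h => by linear_combination -h,
        fun h => by linear_combination -h⟩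
    simp only [e2]
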